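/- Ground states of the octagon-square lattice on the cylinder: for all integers M ≥ 2 and L ≥ 1, the hard-core fermion model on the cylindrical octagon-square lattice O^cyl_{M,L} (periodic in the direction of M squares, open in the direction of L squares) has exactly 2^L zero-energy ground states, i.e. dim ker H = 2^L. -/

import Mathlib

/-! ### The supersymmetric hard-core fermion model on a graph

For a finite simple graph `G` with totally ordered vertex set, the Hilbert space has an
orthonormal basis `{|I⟩ : I an independent set of G}`, the supercharge acts by
`Q|I⟩ = Σ_v ε(v,I) |I ∪ {v}⟩` (sum over `v ∉ I` with `I ∪ {v}` independent,
`ε(v,I) = (−1)^{#{w ∈ I : w < v}}`), and the Hamiltonian is `H = Q Q† + Q† Q`. -/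

open scoped BigOperators

/-- A finite set of vertices is independent if it contains no edge of `G`. -/
def Indep {V : Type*} (G : SimpleGraph V) (I : Finset V) : Prop :=
  ∀ ⦃a⦄, a ∈ I → ∀ ⦃b⦄, b ∈ I → ¬ G.Adj a b

lemma Indep.mono {V : Type*} {G : SimpleGraph V} {I J : Finset V}
    (hI : Indep G I) (hJI : J ⊆ I) : Indep G J :=
  fun _ ha _ hb => hI (hJI ha) (hJI hb)

/-- The independent sets of `G`, indexing the orthonormal basis of the Hilbert space. -/
def IndepSet {V : Type*} (G : SimpleGraph V) : Type _ := {I : Finset V // Indep G I}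

noncomputable instance {V : Type*} [Fintype V] [LinearOrder V] (G : SimpleGraph V) :
    Fintype (IndepSet G) := by
  classical exact Subtype.fintype _

instance {V : Type*} [LinearOrder V] (G : SimpleGraph V) : DecidableEq (IndepSet G) := by
  unfold IndepSet; infer_instance

/-- The Hilbert space `ℋ_G` of the hard-core fermion model: one orthonormal basis state
`|I⟩` for every independent set `I` of `G`. -/
noncomputable abbrev FockSpace {V : Type*} [Fintype V] [LinearOrder V] (G : SimpleGraph V) :=
  EuclideanSpace ℂ (IndepSet G)

/-- The fermionic sign `ε(v, I) = (−1)^{#{w ∈ I : w < v}}`. -/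
def fsign {V : Type*} [LinearOrder V] (I : Finset V) (v : V) : ℂ :=
  (-1) ^ (I.filter (· < v)).card

/-- The supercharge `Q`, with `Q|I⟩ = Σ_v ε(v,I) |I ∪ {v}⟩` over vertices `v ∉ I` such that
`I ∪ {v}` is independent; equivalently `(Qψ)(J) = Σ_{v ∈ J} ε(v, J∖{v}) ψ(J∖{v})`. -/
noncomputable def supercharge {V : Type*} [Fintype V] [LinearOrder V] (G : SimpleGraph V) :
    FockSpace G →ₗ[ℂ] FockSpace G where
  toFun ψ := WithLp.toLp 2 fun J => ∑ v ∈ J.1, fsign (J.1.erase v) v *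
      ψ ⟨J.1.erase v, J.2.mono (Finset.erase_subset v J.1)⟩
  map_add' ψ φ := by
    ext J
    change ∑ v ∈ J.1, fsign (J.1.erase v) v *
      (ψ ⟨J.1.erase v, J.2.mono (Finset.erase_subset v J.1)⟩ +
        φ ⟨J.1.erase v, J.2.mono (Finset.erase_subset v J.1)⟩) = _
    simp [mul_add, Finset.sum_add_distrib]
  map_smul' c ψ := by
    ext J
    change ∑ v ∈ J.1, fsign (J.1.erase v) v *
      (c * ψ ⟨J.1.erase v, J.2.mono (Finset.erase_subset v J.1)⟩) = _
    simp [Finset.mul_sum, mul_left_comm]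

/-- The Hamiltonian `H = Q Q† + Q† Q` of the supersymmetric hard-core fermion model. -/
noncomputable def hamiltonian {V : Type*} [Fintype V] [LinearOrder V] (G : SimpleGraph V) :
    FockSpace G →ₗ[ℂ] FockSpace G :=
  supercharge G ∘ₗ LinearMap.adjoint (supercharge G)
    + LinearMap.adjoint (supercharge G) ∘ₗ supercharge G

/-- The fermion-number operator `F`, with `F|I⟩ = |I| · |I⟩`. -/
noncomputable def numberOp {V : Type*} [Fintype V] [LinearOrder V] (G : SimpleGraph V) :
    FockSpace G →ₗ[ℂ] FockSpace G where
  toFun ψ := WithLp.toLp 2 fun I => (I.1.card : ℂ) * ψ I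
  map_add' ψ φ := by ext I; simp [mul_add]
  map_smul' c ψ := by ext I; simp [mul_left_comm]

/-- The bosonic subspace: the span of the basis states `|I⟩` with `|I|` even. -/
noncomputable def bosonic {V : Type*} [Fintype V] [LinearOrder V] (G : SimpleGraph V) :
    Submodule ℂ (FockSpace G) :=
  Submodule.span ℂ
    {e : FockSpace G | ∃ I : IndepSet G, Even I.1.card ∧ e = EuclideanSpace.single I 1}

/-- The fermionic subspace: the span of the basis states `|I⟩` with `|I|` odd. -/
noncomputable def fermionic {V : Type*} [Fintype V] [LinearOrder V] (G : SimpleGraph V) :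
    Submodule ℂ (FockSpace G) :=
  Submodule.span ℂ
    {e : FockSpace G | ∃ I : IndepSet G, Odd I.1.card ∧ e = EuclideanSpace.single I 1}

/-! ### The octagon-square (4-8) lattice on the cylinder -/

/-- Directed edge relation of the cylindrical octagon-square lattice with `M × L` square
plaquettes: square-plaquette edges, horizontal linking edges `(i,j,1)-(i+1,j,3)` with the
first coordinate periodic, and vertical linking edges `(i,j,2)-(i,j+1,0)` with no vertical
wrap-around. -/
def octCylE (M L : ℕ) [NeZero M] (a b : Fin M × Fin L × Fin 4) : Prop :=
  (a.1 = b.1 ∧ a.2.1 = b.2.1 ∧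
    ((a.2.2 = 0 ∧ b.2.2 = 1) ∨ (a.2.2 = 1 ∧ b.2.2 = 2) ∨
     (a.2.2 = 2 ∧ b.2.2 = 3) ∨ (a.2.2 = 3 ∧ b.2.2 = 0))) ∨
  (b.1 = a.1 + 1 ∧ a.2.1 = b.2.1 ∧ a.2.2 = 1 ∧ b.2.2 = 3) ∨
  (a.1 = b.1 ∧ (b.2.1 : ℕ) = (a.2.1 : ℕ) + 1 ∧ a.2.2 = 2 ∧ b.2.2 = 0)

/-- The cylindrical octagon-square lattice `O^cyl_{M,L}`: periodic in the direction of `M`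
squares, open in the direction of `L` squares. -/
def octCylinder (M L : ℕ) [NeZero M] : SimpleGraph (Fin M × Fin L × Fin 4) where
  Adj a b := a ≠ b ∧ (octCylE M L a b ∨ octCylE M L b a)
  symm := by
    refine ⟨?_⟩
    rintro a b ⟨hne, h⟩
    exact ⟨hne.symm, by tauto⟩
  loopless := ⟨fun a h => h.1 rfl⟩


/-! ### Independent subsets of a vertex set and cocycles -/

section General

set_option linter.unusedSectionVars false

variable {V : Type*} [Fintype V] [LinearOrder V] (G : SimpleGraph V)

/-- Independent sets contained in `S`. -/
noncomputable def indIn (S : Finset V) : Finset (Finset V) := by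
  classical exact S.powerset.filter (Indep G)

lemma mem_indIn {S I : Finset V} : I ∈ indIn G S ↔ I ⊆ S ∧ Indep G I := by
  classical
  simp [indIn]

/-- The coboundary operator on all functions on finsets. -/
noncomputable def cobd (f : Finset V → ℂ) (J : Finset V) : ℂ :=
  ∑ v ∈ J, fsign (J.erase v) v * f (J.erase v)

/-- The cocycles supported on the independent subsets of `S`. -/
noncomputable def cocyc (S : Finset V) : Submodule ℂ (Finset V → ℂ) where
  carrier := {f | (∀ J, J ∉ indIn G S → f J = 0) ∧ ∀ J ∈ indIn G S, cobd f J = 0}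
  zero_mem' := by simp [cobd]
  add_mem' := by
    rintro f g ⟨h1, h2⟩ ⟨h3, h4⟩
    refine ⟨fun J hJ => by simp [h1 J hJ, h3 J hJ], fun J hJ => ?_⟩
    have a := h2 J hJ
    have b := h4 J hJ
    simp only [cobd] at a b ⊢
    simp [mul_add, Finset.sum_add_distrib, a, b]
  smul_mem' := by
    rintro c f ⟨h1, h2⟩
    refine ⟨fun J hJ => by simp [h1 J hJ], fun J hJ => ?_⟩
    have a := h2 J hJ
    simp only [cobd] at a ⊢
    simp only [Pi.smul_apply, smul_eq_mul, mul_left_comm _ c, ← Finset.mul_sum, a, mul_zero]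

variable {G}

lemma sum_indIn_branch {A : Type*} [AddCommMonoid A] {S S1 S2 : Finset V} {v : V} (hv : v ∈ S)
    (h1 : ∀ x, x ∈ S1 ↔ x ∈ S ∧ x ≠ v) (h2 : ∀ x, x ∈ S2 ↔ x ∈ S ∧ x ≠ v ∧ ¬ G.Adj v x)
    (g : Finset V → A) :
    ∑ I ∈ indIn G S, g I = ∑ I ∈ indIn G S1, g I + ∑ I ∈ indIn G S2, g (insert v I) := by
  classical
  have hinj : Set.InjOn (insert v) (indIn G S2 : Set (Finset V)) := by
    intro I hI J hJ hIJ
    have a : v ∉ I := fun h => ((h2 v).1 (((mem_indIn G).1 hI).1 h)).2.1 rfl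
    have b : v ∉ J := fun h => ((h2 v).1 (((mem_indIn G).1 hJ).1 h)).2.1 rfl
    rw [← Finset.erase_insert a, ← Finset.erase_insert b]
    exact congrArg (fun K => K.erase v) hIJ
  rw [← Finset.sum_image hinj, ← Finset.sum_union]
  · congr 1
    ext I
    simp only [Finset.mem_union, Finset.mem_image, mem_indIn]
    constructor
    · rintro ⟨hS, hI⟩
      by_cases hvI : v ∈ I
      · right
        refine ⟨I.erase v, ⟨?_, hI.mono (Finset.erase_subset _ _)⟩, Finset.insert_erase hvI⟩
        intro x hx
        have hx' := Finset.mem_erase.1 hx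
        exact (h2 x).2 ⟨hS hx'.2, hx'.1, hI hvI hx'.2⟩
      · left
        refine ⟨fun x hx => (h1 x).2 ⟨hS hx, fun h => hvI (h ▸ hx)⟩, hI⟩
    · rintro (⟨hS, hI⟩ | ⟨K, ⟨hS, hK⟩, rfl⟩)
      · exact ⟨fun x hx => ((h1 x).1 (hS hx)).1, hI⟩
      · refine ⟨?_, ?_⟩
        · intro x hx
          rcases Finset.mem_insert.1 hx with rfl | hx
          · exact hv
          · exact ((h2 x).1 (hS hx)).1
        · intro a ha b hb
          rcases Finset.mem_insert.1 ha with ha | ha <;> rcases Finset.mem_insert.1 hb with hb | hb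
          · rw [ha, hb]; exact G.loopless.irrefl _
          · rw [ha]; exact ((h2 b).1 (hS hb)).2.2
          · rw [hb]; exact fun h => ((h2 a).1 (hS ha)).2.2 h.symm
          · exact hK ha hb
  · rw [Finset.disjoint_left]
    intro I hI hI'
    obtain ⟨K, -, rfl⟩ := Finset.mem_image.1 hI'
    exact ((h1 v).1 (((mem_indIn G).1 hI).1 (Finset.mem_insert_self _ _))).2 rfl

lemma insert_mem_indIn {S S2 : Finset V} {v : V} (hv : v ∈ S)
    (h2 : ∀ x, x ∈ S2 ↔ x ∈ S ∧ x ≠ v ∧ ¬ G.Adj v x) {I : Finset V} (hvI : v ∉ I) :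
    insert v I ∈ indIn G S ↔ I ∈ indIn G S2 := by
  simp only [mem_indIn]
  constructor
  · rintro ⟨hS, hI⟩
    refine ⟨fun x hx => (h2 x).2 ⟨hS (Finset.mem_insert_of_mem hx), fun h => hvI (h ▸ hx),
      hI (Finset.mem_insert_self _ _) (Finset.mem_insert_of_mem hx)⟩,
      hI.mono (Finset.subset_insert _ _)⟩
  · rintro ⟨hS, hK⟩
    refine ⟨?_, ?_⟩
    · intro x hx
      rcases Finset.mem_insert.1 hx with rfl | hx
      · exact hv
      · exact ((h2 x).1 (hS hx)).1
    · intro a ha b hb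
      rcases Finset.mem_insert.1 ha with ha | ha <;> rcases Finset.mem_insert.1 hb with hb | hb
      · rw [ha, hb]; exact G.loopless.irrefl _
      · rw [ha]; exact ((h2 b).1 (hS hb)).2.2
      · rw [hb]; exact fun h => ((h2 a).1 (hS ha)).2.2 h.symm
      · exact hK ha hb

lemma fsign_mul_self (I : Finset V) (v : V) : fsign I v * fsign I v = 1 := by
  simp [fsign, ← mul_pow]

lemma fsign_ne_zero (I : Finset V) (v : V) : fsign I v ≠ 0 := by
  simp [fsign]

lemma fsign_insert {I : Finset V} {x v : V} (hx : x ∉ I) :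
    fsign (insert x I) v = (if x < v then -1 else 1) * fsign I v := by
  unfold fsign
  rw [Finset.filter_insert]
  split_ifs with h
  · rw [Finset.card_insert_of_notMem (by simp [hx]), pow_succ']
  · simp

/-- Sign for removing `v` from the other end. -/
noncomputable def gsign (I : Finset V) (v : V) : ℂ := (-1) ^ (I.filter (v < ·)).card

lemma gsign_mul_self (I : Finset V) (v : V) : gsign I v * gsign I v = 1 := by
  simp [gsign, ← mul_pow]

lemma gsign_insert {I : Finset V} {x v : V} (hx : x ∉ I) :
    gsign (insert x I) v = (if v < x then -1 else 1) * gsign I v := by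
  unfold gsign
  rw [Finset.filter_insert]
  split_ifs with h
  · rw [Finset.card_insert_of_notMem (by simp [hx]), pow_succ']
  · simp

/-- coboundary at `insert v J`. -/
lemma cobd_insert (f : Finset V → ℂ) {v : V} {J : Finset V} (hv : v ∉ J) :
    cobd f (insert v J) = fsign J v * f J +
      gsign J v * cobd (fun I => gsign I v * f (insert v I)) J := by
  unfold cobd
  rw [Finset.sum_insert hv, Finset.erase_insert hv, Finset.mul_sum]
  congr 1
  refine Finset.sum_congr rfl fun w hw => ?_
  have hwv : w ≠ v := fun h => hv (h ▸ hw)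
  rw [Finset.erase_insert_of_ne hwv.symm]
  obtain ⟨K, hwK, rfl⟩ : ∃ K, w ∉ K ∧ insert w K = J :=
    ⟨J.erase w, Finset.notMem_erase _ _, Finset.insert_erase hw⟩
  rw [Finset.erase_insert hwK]
  have hvK : v ∉ K := fun h => hv (Finset.mem_insert_of_mem h)
  rw [fsign_insert hvK, gsign_insert hwK]
  have := gsign_mul_self K v
  linear_combination (-(if v < w then (-1:ℂ) else 1) * fsign K w * f (insert v K)) * this

lemma cobd_congr {f g : Finset V → ℂ} {J : Finset V} (h : ∀ w ∈ J, f (J.erase w) = g (J.erase w)) :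
    cobd f J = cobd g J :=
  Finset.sum_congr rfl fun w hw => by rw [h w hw]

lemma indIn_erase {S J : Finset V} (h : J ∈ indIn G S) (w : V) : J.erase w ∈ indIn G S := by
  rw [mem_indIn] at h ⊢
  exact ⟨(Finset.erase_subset _ _).trans h.1, h.2.mono (Finset.erase_subset _ _)⟩

lemma finrank_cocyc_branch {S S1 S2 : Finset V} {v : V} (hv : v ∈ S)
    (h1 : ∀ x, x ∈ S1 ↔ x ∈ S ∧ x ≠ v) (h2 : ∀ x, x ∈ S2 ↔ x ∈ S ∧ x ≠ v ∧ ¬ G.Adj v x) :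
    Module.finrank ℂ (cocyc G S) ≤ Module.finrank ℂ (cocyc G S1) + Module.finrank ℂ (cocyc G S2) := by
  classical
  have hS1 : ∀ J, J ∈ indIn G S1 ↔ J ∈ indIn G S ∧ v ∉ J := by
    intro J
    simp only [mem_indIn]
    constructor
    · rintro ⟨a, b⟩
      exact ⟨⟨fun x hx => ((h1 x).1 (a hx)).1, b⟩, fun h => ((h1 v).1 (a h)).2 rfl⟩
    · rintro ⟨⟨a, b⟩, c⟩
      exact ⟨fun x hx => (h1 x).2 ⟨a hx, fun h => c (h ▸ hx)⟩, b⟩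
  let r : cocyc G S →ₗ[ℂ] cocyc G S1 :=
    { toFun := fun f => ⟨fun J => if v ∈ J then 0 else f.1 J, by
        refine ⟨fun J hJ => ?_, fun J hJ => ?_⟩
        · by_cases hvJ : v ∈ J
          · simp [hvJ]
          · simp only [hvJ, if_false]
            exact f.2.1 J fun h => hJ ((hS1 J).2 ⟨h, hvJ⟩)
        · rw [← f.2.2 J ((hS1 J).1 hJ).1]
          refine cobd_congr fun w _ => ?_
          rw [if_neg]
          exact fun h => ((hS1 J).1 hJ).2 (Finset.mem_of_mem_erase h)⟩
      map_add' := fun f g => by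
        ext J
        by_cases hvJ : v ∈ J <;> simp [hvJ]
      map_smul' := fun c f => by
        ext J
        by_cases hvJ : v ∈ J <;> simp [hvJ] }
  have hker : ∀ f : cocyc G S, f ∈ LinearMap.ker r → ∀ J, v ∉ J → f.1 J = 0 := by
    intro f hf J hJ
    have := congrArg (fun g : cocyc G S1 => g.1 J) (LinearMap.mem_ker.1 hf)
    simpa [r, hJ] using this
  let t : LinearMap.ker r →ₗ[ℂ] cocyc G S2 :=
    { toFun := fun f => ⟨fun I => if v ∈ I then 0 else gsign I v * f.1.1 (insert v I), by
        refine ⟨fun J hJ => ?_, fun J hJ => ?_⟩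
        · by_cases hvJ : v ∈ J
          · simp [hvJ]
          · simp only [hvJ, if_false]
            rw [f.1.2.1 _ fun h => hJ ((insert_mem_indIn hv h2 hvJ).1 h), mul_zero]
        · have hvJ : v ∉ J := fun h => ((h2 v).1 (((mem_indIn G).1 hJ).1 h)).2.1 rfl
          have := f.1.2.2 _ ((insert_mem_indIn hv h2 hvJ).2 hJ)
          rw [cobd_insert _ hvJ, hker f.1 f.2 J hvJ, mul_zero, zero_add] at this
          have h0 := (mul_eq_zero.1 this).resolve_left (by simp [gsign])
          rw [← h0]
          refine cobd_congr fun w _ => ?_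
          rw [if_neg]
          exact fun h => hvJ (Finset.mem_of_mem_erase h)⟩
      map_add' := fun f g => by
        ext J
        by_cases hvJ : v ∈ J <;> simp [hvJ, mul_add]
      map_smul' := fun c f => by
        ext J
        by_cases hvJ : v ∈ J <;> simp [hvJ, mul_left_comm] }
  have ht : Function.Injective t := by
    rw [injective_iff_map_eq_zero]
    intro f hf
    ext J
    by_cases hvJ : v ∈ J
    · have := congrArg (fun g : cocyc G S2 => g.1 (J.erase v)) hf
      simpa [t, Finset.insert_erase hvJ, gsign] using this
    · simpa using hker f.1 f.2 J hvJ
  have e1 := LinearMap.finrank_range_add_finrank_ker r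
  have e2 := LinearMap.finrank_le_finrank_of_injective ht
  have e3 := (LinearMap.range r).finrank_le
  omega

lemma finrank_cocyc_isolated {S S1 : Finset V} {v : V} (hv : v ∈ S)
    (h1 : ∀ x, x ∈ S1 ↔ x ∈ S ∧ x ≠ v) (h2 : ∀ x ∈ S, ¬ G.Adj v x) :
    Module.finrank ℂ (cocyc G S) ≤ (indIn G S1).card := by
  classical
  have h2' : ∀ x, x ∈ S1 ↔ x ∈ S ∧ x ≠ v ∧ ¬ G.Adj v x := by
    intro x
    rw [h1]
    exact ⟨fun h => ⟨h.1, h.2, h2 x h.1⟩, fun h => ⟨h.1, h.2.1⟩⟩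
  let t : cocyc G S →ₗ[ℂ] (indIn G S1 → ℂ) :=
    { toFun := fun f I => f.1 (insert v I.1)
      map_add' := fun f g => by ext J; simp
      map_smul' := fun c f => by ext J; simp }
  have ht : Function.Injective t := by
    rw [injective_iff_map_eq_zero]
    intro f hf
    have hz : ∀ J, v ∉ J → f.1 (insert v J) = 0 := by
      intro J hvJ
      by_cases hJ : J ∈ indIn G S1
      · exact congrFun hf ⟨J, hJ⟩
      · exact f.2.1 _ fun h => hJ ((insert_mem_indIn hv h2' hvJ).1 h)
    ext J
    simp only [ZeroMemClass.coe_zero, Pi.zero_apply]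
    by_cases hvJ : v ∈ J
    · have := hz (J.erase v) (Finset.notMem_erase _ _)
      rwa [Finset.insert_erase hvJ] at this
    · by_cases hJ : J ∈ indIn G S1
      · have := f.2.2 _ ((insert_mem_indIn hv h2' hvJ).2 hJ)
        rw [cobd_insert _ hvJ] at this
        have h0 : cobd (fun I => gsign I v * f.1 (insert v I)) J = 0 := by
          refine Finset.sum_eq_zero fun w _ => ?_
          beta_reduce
          rw [hz _ fun h => hvJ (Finset.mem_of_mem_erase h)]
          simp
        rw [h0, mul_zero, add_zero] at this
        exact (mul_eq_zero.1 this).resolve_left (fsign_ne_zero _ _)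
      · refine f.2.1 _ fun h => hJ ?_
        rw [mem_indIn] at h ⊢
        exact ⟨fun x hx => (h1 x).2 ⟨h.1 hx, fun h => hvJ (h ▸ hx)⟩, h.2⟩
  have := LinearMap.finrank_le_finrank_of_injective ht
  simpa using this

variable (G) in
/-- Bound on the cohomology of the independence complex of `G[S]`, with the matching
Euler characteristic. -/
def Good (S : Finset V) (d n : ℕ) : Prop :=
  2 * Module.finrank ℂ (cocyc G S) ≤ (indIn G S).card + n ∧
    ∑ I ∈ indIn G S, (-1 : ℤ) ^ I.card = (-1) ^ d * n

lemma card_indIn_branch {S S1 S2 : Finset V} {v : V} (hv : v ∈ S)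
    (h1 : ∀ x, x ∈ S1 ↔ x ∈ S ∧ x ≠ v) (h2 : ∀ x, x ∈ S2 ↔ x ∈ S ∧ x ≠ v ∧ ¬ G.Adj v x) :
    (indIn G S).card = (indIn G S1).card + (indIn G S2).card := by
  have := sum_indIn_branch hv h1 h2 (fun _ => (1 : ℕ))
  simpa using this

lemma euler_branch {S S1 S2 : Finset V} {v : V} (hv : v ∈ S)
    (h1 : ∀ x, x ∈ S1 ↔ x ∈ S ∧ x ≠ v) (h2 : ∀ x, x ∈ S2 ↔ x ∈ S ∧ x ≠ v ∧ ¬ G.Adj v x) :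
    ∑ I ∈ indIn G S, (-1 : ℤ) ^ I.card =
      ∑ I ∈ indIn G S1, (-1 : ℤ) ^ I.card - ∑ I ∈ indIn G S2, (-1 : ℤ) ^ I.card := by
  rw [sum_indIn_branch hv h1 h2, sub_eq_add_neg, ← Finset.sum_neg_distrib]
  congr 1
  refine Finset.sum_congr rfl fun I hI => ?_
  have hvI : v ∉ I := fun h => ((h2 v).1 (((mem_indIn G).1 hI).1 h)).2.1 rfl
  rw [Finset.card_insert_of_notMem hvI, pow_succ]
  ring

lemma Good.branch {S S1 S2 : Finset V} {d n m : ℕ} (v : V) (hv : v ∈ S)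
    (h1 : ∀ x, x ∈ S1 ↔ x ∈ S ∧ x ≠ v) (h2 : ∀ x, x ∈ S2 ↔ x ∈ S ∧ x ≠ v ∧ ¬ G.Adj v x)
    (g1 : Good G S1 (d + 1) n) (g2 : Good G S2 d m) : Good G S (d + 1) (n + m) := by
  have a := finrank_cocyc_branch hv h1 h2
  have b := card_indIn_branch hv h1 h2
  refine ⟨by have := g1.1; have := g2.1; omega, ?_⟩
  rw [euler_branch hv h1 h2, g1.2, g2.2, pow_succ]
  push_cast
  ring

lemma Good.isolated {S : Finset V} (d : ℕ) (v : V) (hv : v ∈ S)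
    (h2 : ∀ x ∈ S, ¬ G.Adj v x) : Good G S d 0 := by
  have h1 : ∀ x, x ∈ S.erase v ↔ x ∈ S ∧ x ≠ v := by
    intro x
    rw [Finset.mem_erase, and_comm]
  have h2' : ∀ x, x ∈ S.erase v ↔ x ∈ S ∧ x ≠ v ∧ ¬ G.Adj v x := by
    intro x
    rw [h1]
    exact ⟨fun h => ⟨h.1, h.2, h2 x h.1⟩, fun h => ⟨h.1, h.2.1⟩⟩
  have a := finrank_cocyc_isolated hv h1 h2
  have b := card_indIn_branch hv h1 h2'
  refine ⟨by omega, ?_⟩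
  rw [euler_branch hv h1 h2']
  simp

lemma Good.empty : Good G ∅ 0 1 := by
  have hi : indIn G ∅ = {∅} := by
    ext I
    rw [mem_indIn, Finset.subset_empty, Finset.mem_singleton]
    refine ⟨fun h => h.1, ?_⟩
    rintro rfl
    exact ⟨rfl, fun a ha => by simp at ha⟩
  refine ⟨?_, by simp [hi]⟩
  let t : cocyc G ∅ →ₗ[ℂ] ℂ :=
    { toFun := fun f => f.1 ∅
      map_add' := fun f g => by simp
      map_smul' := fun c f => by simp }
  have ht : Function.Injective t := by
    rw [injective_iff_map_eq_zero]
    intro f hf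
    ext J
    by_cases hJ : J = ∅
    · subst hJ
      exact hf
    · exact f.2.1 _ (by simpa [hi] using hJ)
  have := LinearMap.finrank_le_finrank_of_injective ht
  rw [hi]
  simp at this ⊢
  omega

lemma Good.fold {S S1 : Finset V} {d n : ℕ} (u v : V) (hv : v ∈ S) (hu : u ∈ S) (huv : u ≠ v)
    (hadj : ¬ G.Adj v u) (hN : ∀ x ∈ S, G.Adj u x → G.Adj v x)
    (h1 : ∀ x, x ∈ S1 ↔ x ∈ S ∧ x ≠ v) (g1 : Good G S1 (d + 1) n) : Good G S (d + 1) n := by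
  classical
  refine Good.branch (S2 := S.filter fun x => x ≠ v ∧ ¬ G.Adj v x) v hv h1 (by simp) g1
    (m := 0) (Good.isolated d u (by simp [hu, huv, hadj]) ?_)
  intro x hx hux
  rw [Finset.mem_filter] at hx
  exact hx.2.2 (hN x hx.1 hux)

lemma Good.leaf {S S2 : Finset V} {d n : ℕ} (u w : V) (hu : u ∈ S) (hw : w ∈ S) (huw : u ≠ w)
    (hN : ∀ x ∈ S, G.Adj u x → x = w)
    (h2 : ∀ x, x ∈ S2 ↔ x ∈ S ∧ x ≠ w ∧ ¬ G.Adj w x) (g2 : Good G S2 d n) :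
    Good G S (d + 1) n := by
  have := Good.branch (S1 := S.erase w) (n := 0) w hw (by simp [and_comm]) h2
    (Good.isolated (d + 1) u (by simp [hu, huw]) ?_) g2
  · simpa using this
  · intro x hx hux
    rw [Finset.mem_erase] at hx
    exact hx.1 (hN x hx.2 hux)

/-! ### The supercharge -/

lemma supercharge_apply (ψ : FockSpace G) (J : IndepSet G) :
    supercharge G ψ J = ∑ v ∈ J.1, fsign (J.1.erase v) v *
      ψ ⟨J.1.erase v, J.2.mono (Finset.erase_subset v J.1)⟩ := rfl

open Classical in
/-- Extension by zero. -/
noncomputable def extz (ψ : FockSpace G) (I : Finset V) : ℂ :=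
  if h : Indep G I then ψ ⟨I, h⟩ else 0

lemma extz_of (ψ : FockSpace G) (J : IndepSet G) : extz ψ J.1 = ψ J := by
  unfold extz
  rw [dif_pos J.2]
  rfl

lemma supercharge_eq_cobd (ψ : FockSpace G) (J : IndepSet G) :
    supercharge G ψ J = cobd (extz ψ) J.1 := by
  rw [supercharge_apply, cobd]
  refine Finset.sum_congr rfl fun v _ => ?_
  exact congrArg _ (extz_of ψ ⟨J.1.erase v, J.2.mono (Finset.erase_subset v J.1)⟩).symm

lemma cobd_cobd (f : Finset V → ℂ) (J : Finset V) : cobd (cobd f) J = 0 := by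
  induction J using Finset.induction_on generalizing f with
  | empty => simp [cobd]
  | insert v J hv ih =>
    rw [cobd_insert _ hv]
    have h : cobd (fun I => gsign I v * cobd f (insert v I)) J =
        cobd (fun I => gsign I v * (fsign I v * f I) + cobd (fun I => gsign I v * f (insert v I)) I) J := by
      refine cobd_congr fun w _ => ?_
      have hvw : v ∉ J.erase w := fun h => hv (Finset.mem_of_mem_erase h)
      rw [cobd_insert _ hvw]
      linear_combination cobd (fun I => gsign I v * f (insert v I)) (J.erase w) * gsign_mul_self (J.erase w) v
    have hadd : ∀ a b : Finset V → ℂ, cobd (fun I => a I + b I) J = cobd a J + cobd b J := by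
      intro a b
      simp [cobd, mul_add, Finset.sum_add_distrib]
    have hs : cobd (fun I => gsign I v * (fsign I v * f I)) J = - (gsign J v * fsign J v) * cobd f J := by
      unfold cobd
      rw [Finset.mul_sum]
      refine Finset.sum_congr rfl fun w hw => ?_
      have hwv : w ≠ v := fun h => hv (h ▸ hw)
      obtain ⟨K, hwK, rfl⟩ : ∃ K, w ∉ K ∧ insert w K = J :=
        ⟨J.erase w, Finset.notMem_erase _ _, Finset.insert_erase hw⟩
      rw [Finset.erase_insert hwK, fsign_insert hwK, gsign_insert hwK]
      rcases lt_or_gt_of_ne hwv with h | h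
      · simp only [h, not_lt_of_gt h, if_true, if_false]; ring
      · simp only [h, not_lt_of_gt h, if_true, if_false]; ring
    rw [h, hadd, ih, hs, add_zero]
    linear_combination (- fsign J v * cobd f J) * gsign_mul_self J v

lemma supercharge_sq (ψ : FockSpace G) : supercharge G (supercharge G ψ) = 0 := by
  ext J
  rw [supercharge_eq_cobd, PiLp.zero_apply, ← cobd_cobd (extz ψ) J.1]
  refine cobd_congr fun w _ => ?_
  exact (extz_of (supercharge G ψ) ⟨J.1.erase w, J.2.mono (Finset.erase_subset w J.1)⟩).trans
    (supercharge_eq_cobd _ _)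

lemma finrank_ker_le : Module.finrank ℂ (LinearMap.ker (supercharge G)) ≤
    Module.finrank ℂ (cocyc G Finset.univ) := by
  let t : LinearMap.ker (supercharge G) →ₗ[ℂ] cocyc G Finset.univ :=
    { toFun := fun f => ⟨extz f.1, by
        refine ⟨fun J hJ => ?_, fun J hJ => ?_⟩
        · unfold extz
          rw [dif_neg]
          exact fun h => hJ ((mem_indIn G).2 ⟨Finset.subset_univ _, h⟩)
        · have := supercharge_eq_cobd f.1 ⟨J, ((mem_indIn G).1 hJ).2⟩
          rw [← this, LinearMap.mem_ker.1 f.2]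
          rfl⟩
      map_add' := fun f g => by
        ext J
        by_cases h : Indep G J <;> (simp [extz, h]; try rfl)
      map_smul' := fun c f => by
        ext J
        by_cases h : Indep G J <;> (simp [extz, h]; try rfl) }
  have ht : Function.Injective t := by
    rw [injective_iff_map_eq_zero]
    intro f hf
    ext J
    have := congrArg (fun g : cocyc G Finset.univ => g.1 J.1) hf
    simpa [t, extz_of] using this
  exact LinearMap.finrank_le_finrank_of_injective ht

lemma ker_hamiltonian : LinearMap.ker (hamiltonian G) =
    LinearMap.ker (supercharge G) ⊓ (LinearMap.range (supercharge G))ᗮ := by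
  ext ψ
  rw [LinearMap.orthogonal_range, Submodule.mem_inf, LinearMap.mem_ker, LinearMap.mem_ker,
    LinearMap.mem_ker]
  constructor
  · intro h
    have h2 : inner ℂ ψ (hamiltonian G ψ) = 0 := by rw [h, inner_zero_right]
    simp only [hamiltonian, LinearMap.add_apply, LinearMap.comp_apply, inner_add_right,
      LinearMap.adjoint_inner_right] at h2
    rw [← LinearMap.adjoint_inner_left, inner_self_eq_norm_sq_to_K, inner_self_eq_norm_sq_to_K] at h2
    have h3 : ‖(LinearMap.adjoint (supercharge G)) ψ‖ ^ 2 + ‖supercharge G ψ‖ ^ 2 = 0 := by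
      have h4 := congrArg Complex.re h2
      simpa [← Complex.ofReal_pow] using h4
    have a := sq_nonneg ‖(LinearMap.adjoint (supercharge G)) ψ‖
    have b := sq_nonneg ‖supercharge G ψ‖
    constructor
    · exact norm_eq_zero.1 (pow_eq_zero_iff (two_ne_zero) |>.1 (by linarith))
    · exact norm_eq_zero.1 (pow_eq_zero_iff (two_ne_zero) |>.1 (by linarith))
  · rintro ⟨h1, h2⟩
    simp [hamiltonian, h1, h2]

lemma finrank_ker_hamiltonian : Module.finrank ℂ (LinearMap.ker (hamiltonian G)) +
    Module.finrank ℂ (LinearMap.range (supercharge G)) =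
    Module.finrank ℂ (LinearMap.ker (supercharge G)) := by
  have hle : LinearMap.range (supercharge G) ≤ LinearMap.ker (supercharge G) := by
    rintro _ ⟨ψ, rfl⟩
    exact supercharge_sq ψ
  have := Submodule.finrank_add_inf_finrank_orthogonal hle
  rw [ker_hamiltonian, inf_comm]
  omega

variable (G) in
/-- States of fermion-number parity `p`. -/
noncomputable def parSub (p : ℕ) : Submodule ℂ (FockSpace G) where
  carrier := {ψ | ∀ I : IndepSet G, I.1.card % 2 ≠ p % 2 → ψ I = 0}
  zero_mem' := fun I _ => rfl
  add_mem' := by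
    intro a b ha hb I hI
    simp [ha I hI, hb I hI]
  smul_mem' := by
    intro c a ha I hI
    simp [ha I hI]

variable (G) in
/-- Number of independent sets of parity `p`. -/
noncomputable def parCount (p : ℕ) : ℕ :=
  ((indIn G Finset.univ).filter fun I => I.card % 2 = p % 2).card

lemma finrank_parSub_le (p : ℕ) : Module.finrank ℂ (parSub G p) ≤ parCount G p := by
  let t : parSub G p →ₗ[ℂ]
      (((indIn G Finset.univ).filter fun I => I.card % 2 = p % 2 : Finset (Finset V)) → ℂ) :=
    { toFun := fun f I => f.1 ⟨I.1, ((mem_indIn G).1 (Finset.mem_filter.1 I.2).1).2⟩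
      map_add' := fun f g => by ext J; rfl
      map_smul' := fun c f => by ext J; rfl }
  have ht : Function.Injective t := by
    rw [injective_iff_map_eq_zero]
    intro f hf
    ext J
    by_cases h : J.1.card % 2 = p % 2
    · exact congrFun hf ⟨J.1, Finset.mem_filter.2 ⟨(mem_indIn G).2 ⟨Finset.subset_univ _, J.2⟩, h⟩⟩
    · exact f.2 J h
  have := LinearMap.finrank_le_finrank_of_injective ht
  rwa [Module.finrank_fintype_fun_eq_card, Fintype.card_coe] at this

lemma supercharge_parSub {p q : ℕ} (hpq : (p + 1) % 2 = q % 2) {ψ : FockSpace G}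
    (h : ψ ∈ parSub G p) : supercharge G ψ ∈ parSub G q := by
  intro J hJ
  rw [supercharge_apply]
  refine Finset.sum_eq_zero fun v hv => ?_
  refine mul_eq_zero_of_right _ (h _ ?_)
  have hc := Finset.card_erase_add_one hv
  change (J.1.erase v).card % 2 ≠ _
  omega

lemma parSub_sup {p q : ℕ} (hpq : (p + 1) % 2 = q % 2) : parSub G p ⊔ parSub G q = ⊤ := by
  rw [eq_top_iff]
  intro ψ _
  rw [Submodule.mem_sup]
  refine ⟨WithLp.toLp 2 fun I => if I.1.card % 2 = p % 2 then ψ I else 0, ?_,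
    WithLp.toLp 2 fun I => if I.1.card % 2 = p % 2 then 0 else ψ I, ?_, ?_⟩
  · intro I hI
    exact if_neg hI
  · intro I hI
    exact if_pos (by omega)
  · ext I
    change (if I.1.card % 2 = p % 2 then ψ I else 0) + (if I.1.card % 2 = p % 2 then 0 else ψ I) = _
    split_ifs <;> simp

lemma finrank_range_le {p q : ℕ} (hpq : (p + 1) % 2 = q % 2) :
    Module.finrank ℂ (LinearMap.range (supercharge G)) ≤ parCount G p := by
  have h1 : LinearMap.range (supercharge G) =
      (parSub G p).map (supercharge G) ⊔ (parSub G q).map (supercharge G) := by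
    rw [← Submodule.map_sup, parSub_sup hpq, LinearMap.range_eq_map]
  have h2 : (parSub G q).map (supercharge G) ≤ parSub G p ⊓ LinearMap.ker (supercharge G) := by
    rintro _ ⟨ψ, hψ, rfl⟩
    exact ⟨supercharge_parSub (by omega) hψ, supercharge_sq ψ⟩
  have h3 := LinearMap.finrank_range_add_finrank_ker ((supercharge G).domRestrict (parSub G p))
  have h4 : Module.finrank ℂ (LinearMap.ker ((supercharge G).domRestrict (parSub G p))) =
      Module.finrank ℂ ↥(parSub G p ⊓ LinearMap.ker (supercharge G)) := by
    rw [← Submodule.map_comap_subtype, Submodule.finrank_map_subtype_eq]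
    rfl
  have h5 : LinearMap.range ((supercharge G).domRestrict (parSub G p)) =
      (parSub G p).map (supercharge G) := LinearMap.range_domRestrict _ _
  have h6 := Submodule.finrank_mono h2
  have h7 := Submodule.finrank_add_le_finrank_add_finrank ((parSub G p).map (supercharge G))
    ((parSub G q).map (supercharge G))
  have h8 := finrank_parSub_le (G := G) p
  rw [h5] at h3
  rw [h1]
  omega

lemma card_eq_parCount : (indIn G Finset.univ).card = parCount G 0 + parCount G 1 := by
  rw [parCount, parCount, ← Finset.card_filter_add_card_filter_not (fun I => I.card % 2 = 0 % 2)]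
  congr 2
  refine Finset.filter_congr fun I _ => ?_
  omega

lemma euler_eq_parCount : ∑ I ∈ indIn G Finset.univ, (-1 : ℤ) ^ I.card =
    (parCount G 0 : ℤ) - parCount G 1 := by
  rw [parCount, parCount, Finset.card_filter, Finset.card_filter]
  push_cast
  rw [← Finset.sum_sub_distrib]
  refine Finset.sum_congr rfl fun I _ => ?_
  rcases Nat.even_or_odd I.card with h | h
  · rw [h.neg_one_pow]
    simp [Nat.even_iff.1 h]
  · rw [h.neg_one_pow]
    simp [Nat.odd_iff.1 h]

lemma card_indepSet : Module.finrank ℂ (FockSpace G) = (indIn G Finset.univ).card := by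
  rw [finrank_euclideanSpace, ← Fintype.card_coe]
  refine Fintype.card_congr (Equiv.subtypeEquivRight fun I => ?_)
  rw [mem_indIn]
  exact ⟨fun h => ⟨Finset.subset_univ _, h⟩, fun h => h.2⟩

lemma Good.finrank_eq {d n : ℕ} (h : Good G Finset.univ d n) :
    Module.finrank ℂ (LinearMap.ker (hamiltonian G)) = n := by
  have a1 := finrank_ker_hamiltonian (G := G)
  have a2 := finrank_ker_le (G := G)
  have a3 := LinearMap.finrank_range_add_finrank_ker (supercharge G)
  have a4 := finrank_range_le (G := G) (p := 0) (q := 1) rfl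
  have a5 := finrank_range_le (G := G) (p := 1) (q := 0) rfl
  have a6 := card_eq_parCount (G := G)
  have a7 := euler_eq_parCount (G := G)
  have a8 := card_indepSet (G := G)
  obtain ⟨b1, b2⟩ := h
  rw [a7] at b2
  rcases neg_one_pow_eq_or ℤ d with e | e <;> rw [e] at b2 <;> omega

end General

/-! ### The cylinder -/

section Cylinder

set_option linter.unusedSimpArgs false

/-- The edge relation in terms of natural numbers. -/
def natE (M i j c i' j' c' : ℕ) : Prop :=
  (i = i' ∧ j = j' ∧
    ((c = 0 ∧ c' = 1) ∨ (c = 1 ∧ c' = 2) ∨ (c = 2 ∧ c' = 3) ∨ (c = 3 ∧ c' = 0))) ∨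
  ((i' = i + 1 ∨ (i + 1 = M ∧ i' = 0)) ∧ j = j' ∧ c = 1 ∧ c' = 3) ∨
  (i = i' ∧ j' = j + 1 ∧ c = 2 ∧ c' = 0)

lemma fin_eq_add_one_iff {M : ℕ} [NeZero M] (hM : 2 ≤ M) (a b : Fin M) :
    b = a + 1 ↔ ((b : ℕ) = a + 1 ∨ ((a : ℕ) + 1 = M ∧ (b : ℕ) = 0)) := by
  have ha := a.2
  have hb := b.2
  rw [Fin.ext_iff, Fin.val_add]
  have h1 : ((1 : Fin M) : ℕ) = 1 := by
    rw [Fin.val_one', Nat.mod_eq_of_lt (by omega)]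
  rw [h1]
  rcases Nat.lt_or_ge (a + 1 : ℕ) M with h | h
  · rw [Nat.mod_eq_of_lt h]
    omega
  · have : (a : ℕ) + 1 = M := by omega
    rw [this, Nat.mod_self]
    omega

lemma octCylE_iff {M L : ℕ} [NeZero M] (hM : 2 ≤ M) (i i' : Fin M) (j j' : Fin L) (c c' : Fin 4) :
    octCylE M L (i, j, c) (i', j', c') ↔ natE M i j c i' j' c' := by
  unfold octCylE natE
  simp only [fin_eq_add_one_iff hM]
  simp only [Fin.ext_iff]
  rfl

lemma octAdj_iff {M L : ℕ} [NeZero M] (hM : 2 ≤ M) (i i' : Fin M) (j j' : Fin L) (c c' : Fin 4) :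
    (octCylinder M L).Adj (i, j, c) (i', j', c') ↔
      natE M i j c i' j' c' ∨ natE M i' j' c' i j c := by
  change _ ∧ (_ ∨ _) ↔ _
  rw [octCylE_iff hM, octCylE_iff hM]
  refine ⟨fun h => h.2, fun h => ⟨?_, h⟩⟩
  rintro h2
  simp only [Prod.mk.injEq, Fin.ext_iff] at h2
  unfold natE at h
  omega

open Classical in
/-- Vertex sets given by a predicate on the coordinates. -/
noncomputable def vset (M L : ℕ) (p : ℕ → ℕ → ℕ → Prop) : Finset (Fin M × Fin L × Fin 4) :=
  Finset.univ.filter fun x => p x.1 x.2.1 x.2.2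

lemma mem_vset {M L : ℕ} {p : ℕ → ℕ → ℕ → Prop} (i : Fin M) (j : Fin L) (c : Fin 4) :
    (i, j, c) ∈ vset M L p ↔ p i j c := by
  simp [vset]

lemma four_vals : ((0 : Fin 4) : ℕ) = 0 ∧ ((1 : Fin 4) : ℕ) = 1 ∧ ((2 : Fin 4) : ℕ) = 2 ∧
    ((3 : Fin 4) : ℕ) = 3 := ⟨rfl, rfl, rfl, rfl⟩

variable {M L : ℕ} [NeZero M] [LinearOrder (Fin M × Fin L × Fin 4)]

/-- First path. -/
lemma pathA (hM : 2 ≤ M) {j n d : ℕ} (hj : j < L)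
    (h : Good (octCylinder M L) (vset M L fun _ r _ => r < j) d n) (t k : ℕ) (hk : k + t = M) :
    Good (octCylinder M L) (vset M L fun i r c => r < j ∨
      (r = j ∧ c ≠ 0 ∧ k ≤ i ∧ ¬ (i = k ∧ c = 3))) (d + t) n := by
  obtain ⟨v0, v1, v2, v3⟩ := four_vals
  induction t generalizing k with
  | zero =>
    rw [Nat.add_zero]
    convert h using 1
    ext ⟨i, r, c⟩
    have := i.2
    simp only [mem_vset]
    omega
  | succ t ih =>
    refine Good.leaf (⟨k, by omega⟩, ⟨j, hj⟩, 2) (⟨k, by omega⟩, ⟨j, hj⟩, 1) ?_ ?_ ?_ ?_ ?_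
      (ih (k + 1) (by omega))
    · simp [mem_vset, v0, v1, v2, v3]; try omega
    · simp [mem_vset, v0, v1, v2, v3]; try omega
    · simp
    · rintro ⟨i, r, c⟩
      have hi := i.2
      have hc := c.2
      simp only [mem_vset, octAdj_iff hM, Prod.mk.injEq, Fin.ext_iff, v0, v1, v2, v3, natE]
      generalize (i : ℕ) = i at *
      generalize (r : ℕ) = r at *
      generalize (c : ℕ) = c at *
      interval_cases c <;> simp <;> omega
    · rintro ⟨i, r, c⟩
      have hi := i.2
      have hc := c.2
      simp only [mem_vset, octAdj_iff hM, ne_eq, Prod.mk.injEq, Fin.ext_iff, v0, v1, v2, v3, natE]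
      generalize (i : ℕ) = i at *
      generalize (r : ℕ) = r at *
      generalize (c : ℕ) = c at *
      interval_cases c <;> simp <;> omega

/-- Second path. -/
lemma pathB (hM : 2 ≤ M) {j n d : ℕ} (hj : j < L)
    (h : Good (octCylinder M L) (vset M L fun _ r _ => r < j) d n) (t k : ℕ) (hk : k + t + 1 = M) :
    Good (octCylinder M L) (vset M L fun i r c => r < j ∨
      (r = j ∧ c ≠ 0 ∧ k ≤ i ∧ (i = k → c = 1) ∧ (i + 1 = M → c ≠ 1))) (d + t) n := by
  obtain ⟨v0, v1, v2, v3⟩ := four_vals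
  induction t generalizing k with
  | zero =>
    rw [Nat.add_zero]
    convert h using 1
    ext ⟨i, r, c⟩
    have := i.2
    simp only [mem_vset]
    omega
  | succ t ih =>
    refine Good.leaf (⟨k, by omega⟩, ⟨j, hj⟩, 1) (⟨k + 1, by omega⟩, ⟨j, hj⟩, 3) ?_ ?_ ?_ ?_ ?_
      (ih (k + 1) (by omega))
    · simp [mem_vset, v0, v1, v2, v3]; try omega
    · simp [mem_vset, v0, v1, v2, v3]; try omega
    · simp
    · rintro ⟨i, r, c⟩
      have hi := i.2
      have hc := c.2
      simp only [mem_vset, octAdj_iff hM, Prod.mk.injEq, Fin.ext_iff, v0, v1, v2, v3, natE]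
      generalize (i : ℕ) = i at *
      generalize (r : ℕ) = r at *
      generalize (c : ℕ) = c at *
      interval_cases c <;> simp <;> omega
    · rintro ⟨i, r, c⟩
      have hi := i.2
      have hc := c.2
      simp only [mem_vset, octAdj_iff hM, ne_eq, Prod.mk.injEq, Fin.ext_iff, v0, v1, v2, v3, natE]
      generalize (i : ℕ) = i at *
      generalize (r : ℕ) = r at *
      generalize (c : ℕ) = c at *
      interval_cases c <;> simp <;> omega

/-- The cycle of length `3M`. -/
lemma cycleGood (hM : 2 ≤ M) {j n d : ℕ} (hj : j < L)
    (h : Good (octCylinder M L) (vset M L fun _ r _ => r < j) d n) :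
    Good (octCylinder M L) (vset M L fun _ r c => r < j ∨ (r = j ∧ c ≠ 0)) (d + M) (n + n) := by
  obtain ⟨v0, v1, v2, v3⟩ := four_vals
  obtain ⟨t, rfl⟩ : ∃ t, M = t + 1 := ⟨M - 1, by omega⟩
  have a := pathA hM hj h (t + 1) 0 (by omega)
  have b := pathB hM hj h t 0 (by omega)
  refine Good.branch (⟨0, by omega⟩, ⟨j, hj⟩, 3) ?_ ?_ ?_ a b
  · simp [mem_vset, v0, v1, v2, v3]; try omega
  · rintro ⟨i, r, c⟩
    have hi := i.2
    have hc := c.2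
    simp only [mem_vset, ne_eq, Prod.mk.injEq, Fin.ext_iff, v0, v1, v2, v3]
    generalize (i : ℕ) = i at *
    generalize (r : ℕ) = r at *
    generalize (c : ℕ) = c at *
    interval_cases c <;> simp <;> omega
  · rintro ⟨i, r, c⟩
    have hi := i.2
    have hc := c.2
    simp only [mem_vset, octAdj_iff hM, ne_eq, Prod.mk.injEq, Fin.ext_iff, v0, v1, v2, v3, natE]
    generalize (i : ℕ) = i at *
    generalize (r : ℕ) = r at *
    generalize (c : ℕ) = c at *
    interval_cases c <;> simp <;> omega

/-- Folding away the vertices `(i, j, 0)` of the top row. -/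
lemma foldRow (hM : 2 ≤ M) {j n d : ℕ} (hj : j < L)
    (h : Good (octCylinder M L) (vset M L fun _ r c => r < j ∨ (r = j ∧ c ≠ 0)) (d + 1) n)
    (t k : ℕ) (hk : k + t = M) :
    Good (octCylinder M L) (vset M L fun i r c => r < j ∨ (r = j ∧ (c ≠ 0 ∨ k ≤ i))) (d + 1) n := by
  obtain ⟨v0, v1, v2, v3⟩ := four_vals
  induction t generalizing k with
  | zero =>
    convert h using 1
    ext ⟨i, r, c⟩
    have := i.2
    simp only [mem_vset]
    omega
  | succ t ih =>
    refine Good.fold (⟨k, by omega⟩, ⟨j, hj⟩, 2) (⟨k, by omega⟩, ⟨j, hj⟩, 0) ?_ ?_ ?_ ?_ ?_ ?_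
      (ih (k + 1) (by omega))
    · simp [mem_vset, v0, v1, v2, v3]; try omega
    · simp [mem_vset, v0, v1, v2, v3]; try omega
    · simp
    · simp only [octAdj_iff hM, v0, v1, v2, v3, natE]
      omega
    · rintro ⟨i, r, c⟩
      have hi := i.2
      have hc := c.2
      simp only [mem_vset, octAdj_iff hM, v0, v1, v2, v3, natE]
      generalize (i : ℕ) = i at *
      generalize (r : ℕ) = r at *
      generalize (c : ℕ) = c at *
      interval_cases c <;> simp <;> omega
    · rintro ⟨i, r, c⟩
      have hi := i.2
      have hc := c.2
      simp only [mem_vset, ne_eq, Prod.mk.injEq, Fin.ext_iff, v0, v1, v2, v3]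
      generalize (i : ℕ) = i at *
      generalize (r : ℕ) = r at *
      generalize (c : ℕ) = c at *
      interval_cases c <;> simp <;> omega

lemma rowsGood (hM : 2 ≤ M) (j : ℕ) (hj : j ≤ L) :
    Good (octCylinder M L) (vset M L fun _ r _ => r < j) (j * M) (2 ^ j) := by
  induction j with
  | zero =>
    have he : vset M L (fun _ r _ => r < 0) = ∅ := by
      ext ⟨i, r, c⟩
      simp [mem_vset]
    rw [he]
    simpa using Good.empty (G := octCylinder M L)
  | succ j ih =>
    have h1 := cycleGood hM (by omega) (ih (by omega))
    obtain ⟨t, ht⟩ : ∃ t, j * M + M = t + 1 := ⟨j * M + M - 1, by omega⟩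
    rw [ht] at h1
    have h2 := foldRow hM (by omega) h1 M 0 (by omega)
    rw [← ht, ← two_mul, ← pow_succ', ← Nat.succ_mul] at h2
    convert h2 using 1
    ext ⟨i, r, c⟩
    simp only [mem_vset]
    omega

end Cylinder

/-- For `M ≥ 2` and `L ≥ 1`, the hard-core fermion model on the
cylindrical octagon-square lattice `O^cyl_{M,L}` has exactly `2^L` zero-energy ground
states. -/
theorem octagon_square_cylinder_ground_states (M L : ℕ) [NeZero M]
    (hM : 2 ≤ M) (hL : 1 ≤ L)
    [LinearOrder (Fin M × Fin L × Fin 4)] :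
    Module.finrank ℂ ↥(LinearMap.ker (hamiltonian (octCylinder M L))) = 2 ^ L := by
  have h := rowsGood (M := M) hM L le_rfl
  have he : vset M L (fun _ r _ => r < L) = Finset.univ := by
    ext ⟨i, r, c⟩
    simp [mem_vset]
  rw [he] at h
  exact h.finrank_eq
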